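/- Let S_1 be a homogeneous numerical semigroup minimally generated by m_1 < … < m_d, let q ≥ 2 be an integer and p ∈ S_1 with gcd(p,q) = 1 and p ∉ {m_1,…,m_d}, and let S = ⟨q m_1,…,q m_d, p⟩ be the corresponding extension of S_1. Then AP(S, q m_1) is a homogeneous subset of S (equivalently, S is homogeneous) if and only if q = ord_{S_1}(p) or p ∉ AP(S_1, m_1). -/

import Mathlib

open scoped BigOperators

/-- The value `Σ aᵢ nᵢ` of a tuple of coefficients `a` w.r.t. the generators `n`. -/
def sval {d : ℕ} (n : Fin d → ℕ) (a : Fin d → ℕ) : ℕ := ∑ i, a i * n i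

/-- The total length `Σ aᵢ` of a factorization. -/
def tlen {d : ℕ} (a : Fin d → ℕ) : ℕ := ∑ i, a i

/-- The submonoid of `ℕ` generated by `n`. -/
def gen {d : ℕ} (n : Fin d → ℕ) : Set ℕ := {s : ℕ | ∃ a : Fin d → ℕ, s = sval n a}

/-- The Apéry set of the semigroup generated by `n` with respect to `s`:
elements `x` of the semigroup such that `x - s` is not in the semigroup. -/
def Apery {d : ℕ} (n : Fin d → ℕ) (s : ℕ) : Set ℕ :=
  {x : ℕ | x ∈ gen n ∧ ¬ ∃ y ∈ gen n, x = s + y}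

/-- A subset `T` is homogeneous if every nonzero element of `T` has all its
factorizations of the same length. -/
def HomogSet {d : ℕ} (n : Fin d → ℕ) (T : Set ℕ) : Prop :=
  ∀ t ∈ T, t ≠ 0 → ∀ a b : Fin d → ℕ, sval n a = t → sval n b = t → tlen a = tlen b

/-- The order of `s`: the maximal length of a factorization of `s`. -/
noncomputable def ordS {d : ℕ} (n : Fin d → ℕ) (s : ℕ) : ℕ :=
  sSup {l : ℕ | ∃ a : Fin d → ℕ, sval n a = s ∧ tlen a = l}

/-- The torsion set of the semigroup generated by `n`, with respect to the
generator of index `i0` (the smallest generator). -/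
noncomputable def Torsion {d : ℕ} (n : Fin d → ℕ) (i0 : Fin d) : Set ℕ :=
  {s : ℕ | s ∈ gen n ∧ ∃ c : ℕ, 0 < c ∧ ordS n s + c < ordS n (s + c * n i0)}

/-- `n` is a minimal system of generators: any expression of a generator as a
nonnegative combination of the generators has total coefficient sum one. -/
def MinGen {d : ℕ} (n : Fin d → ℕ) : Prop :=
  ∀ r : Fin d, ∀ a : Fin d → ℕ, n r = sval n a → tlen a = 1

/-- `n` generates a numerical semigroup (cofinite in `ℕ`). -/
def IsNumerical {d : ℕ} (n : Fin d → ℕ) : Prop := {x : ℕ | x ∉ gen n}.Finite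

/-- The monomial `x^a = Π xᵢ^{aᵢ}`. -/
noncomputable def monom (k : Type*) [CommRing k] {d : ℕ} (a : Fin d → ℕ) :
    MvPolynomial (Fin d) k :=
  ∏ i, (MvPolynomial.X i : MvPolynomial (Fin d) k) ^ a i

/-- The toric ideal `I_S`: kernel of `k[x₁,…,x_d] → k[t]`, `xᵢ ↦ t^{nᵢ}`. -/
noncomputable def toricIdeal (k : Type*) [CommRing k] {d : ℕ} (n : Fin d → ℕ) :
    Ideal (MvPolynomial (Fin d) k) :=
  RingHom.ker (MvPolynomial.aeval (R := k)
    (fun i => (Polynomial.X : Polynomial k) ^ n i)).toRingHom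

/-- `E` is a minimal generating set of the ideal `I`: it spans `I` and no
proper subset spans `I`. -/
def IsMinGenSet {R : Type*} [CommRing R] (I : Ideal R) (E : Set R) : Prop :=
  Ideal.span E = I ∧ ∀ E' : Set R, E' ⊂ E → Ideal.span E' ≠ I

/-- Membership of an integer in the semigroup generated by `n`. -/
def memZ {d : ℕ} (n : Fin d → ℕ) (z : ℤ) : Prop := ∃ x ∈ gen n, (x : ℤ) = z

/-- A numerical semigroup with Frobenius number `F = max (ℤ ∖ S)` is symmetric
if for every integer `z`, `z ∈ S ↔ F - z ∉ S`. -/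
def IsSymmetric {d : ℕ} (n : Fin d → ℕ) : Prop :=
  ∃ F : ℤ, ¬ memZ n F ∧ (∀ z : ℤ, F < z → memZ n z) ∧
    ∀ z : ℤ, memZ n z ↔ ¬ memZ n (F - z)

/-- A numerical semigroup with Frobenius number `F = max (ℤ ∖ S)` is
pseudo-symmetric if `F` is even and for every integer `z`,
`z ∈ S ↔ (z ≠ F/2 ∧ F - z ∉ S)`. -/
def IsPseudoSymmetric {d : ℕ} (n : Fin d → ℕ) : Prop :=
  ∃ F : ℤ, ¬ memZ n F ∧ (∀ z : ℤ, F < z → memZ n z) ∧ F % 2 = 0 ∧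
    ∀ z : ℤ, memZ n z ↔ (z ≠ F / 2 ∧ ¬ memZ n (F - z))

/-- The generators `q·m₁,…,q·m_d, p·n₁,…,p·n_e` of the gluing of two numerical
semigroups. -/
def glueGen {d e : ℕ} (mg : Fin d → ℕ) (ng : Fin e → ℕ) (p q : ℕ) :
    Fin (d + e) → ℕ :=
  Fin.append (fun i => q * mg i) (fun i => p * ng i)

/-!
Two factorizations `q A + k p = q B + l p` with `k ≤ l` of an element of `⟨q m₁, …, q m_d, p⟩`
differ by trading `q` copies of `p` for the element `q p` some number `j` of times: `l = k + j q`
and `A = B + j p`, because `p` and `q` are coprime. If the element lies in `AP(S, q m₁)`, then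
`A` lies in `AP(S₁, m₁)`, and so does its summand `p` unless `j = 0`. By homogeneity of `S₁` one
trade changes the length by `ord p - q`, so lengths agree when `q = ord p`. Conversely, if
`p ∈ AP(S₁, m₁)`, then `q p ∈ AP(S, q m₁)` has factorizations of lengths `ord p` and `q`.
-/

section Factorization

variable {d : ℕ} {n : Fin d → ℕ}

theorem sval_add (n a b : Fin d → ℕ) : sval n (a + b) = sval n a + sval n b :=
  add_dotProduct a b n

theorem sval_smul (n : Fin d → ℕ) (j : ℕ) (a : Fin d → ℕ) : sval n (j • a) = j * sval n a :=
  smul_dotProduct j a n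

theorem tlen_add (a b : Fin d → ℕ) : tlen (a + b) = tlen a + tlen b :=
  Finset.sum_add_distrib

theorem tlen_smul (j : ℕ) (a : Fin d → ℕ) : tlen (j • a) = j * tlen a :=
  (Finset.mul_sum _ _ _).symm

theorem tlen_eq_zero_of_sval_eq_zero (hn : ∀ i, 0 < n i) {a : Fin d → ℕ} (ha : sval n a = 0) :
    tlen a = 0 := by
  simp only [sval, tlen, Finset.sum_eq_zero_iff, mul_eq_zero] at ha ⊢
  exact fun i hi => (ha i hi).resolve_right (hn i).ne'

theorem add_mem_gen {x y : ℕ} (hx : x ∈ gen n) (hy : y ∈ gen n) : x + y ∈ gen n := by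
  obtain ⟨a, rfl⟩ := hx
  obtain ⟨b, rfl⟩ := hy
  exact ⟨a + b, (sval_add n a b).symm⟩

theorem mul_mem_gen (j : ℕ) {x : ℕ} (hx : x ∈ gen n) : j * x ∈ gen n := by
  obtain ⟨a, rfl⟩ := hx
  exact ⟨j • a, (sval_smul n j a).symm⟩

theorem mem_apery_of_add_mem_apery {m x y : ℕ} (hx : x ∈ gen n) (hy : y ∈ gen n)
    (hxy : x + y ∈ Apery n m) : x ∈ Apery n m := by
  refine ⟨hx, ?_⟩
  rintro ⟨z, hz, rfl⟩
  exact hxy.2 ⟨z + y, add_mem_gen hz hy, add_assoc m z y⟩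

theorem mem_apery_of_add_mul_mem_apery {m p s j : ℕ} (hp : p ∈ gen n) (hs : s ∈ gen n)
    (hj : 0 < j) (h : s + j * p ∈ Apery n m) : p ∈ Apery n m := by
  obtain ⟨i, rfl⟩ := Nat.exists_eq_add_of_lt hj
  have hsum : s + (0 + i + 1) * p = p + (s + i * p) := by ring
  exact mem_apery_of_add_mem_apery hp (add_mem_gen hs (mul_mem_gen i hp)) (hsum ▸ h)

theorem HomogSet.tlen_eq {T : Set ℕ} (hT : HomogSet n T) (hn : ∀ i, 0 < n i)
    {a b : Fin d → ℕ} (ha : sval n a ∈ T) (hab : sval n a = sval n b) : tlen a = tlen b := by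
  by_cases h0 : sval n a = 0
  · rw [tlen_eq_zero_of_sval_eq_zero hn h0, tlen_eq_zero_of_sval_eq_zero hn (hab ▸ h0)]
  · exact hT _ ha h0 a b rfl hab.symm

theorem HomogSet.ordS_sval {T : Set ℕ} (hT : HomogSet n T) {c : Fin d → ℕ}
    (hc : sval n c ∈ T) (h0 : sval n c ≠ 0) : ordS n (sval n c) = tlen c := by
  have lengths_eq : {l : ℕ | ∃ a, sval n a = sval n c ∧ tlen a = l} = {tlen c} := by
    ext l
    constructor
    · rintro ⟨a, ha, rfl⟩
      exact hT _ hc h0 a c ha rfl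
    · rintro rfl
      exact ⟨c, rfl, rfl⟩
  rw [ordS, lengths_eq, csSup_singleton]

theorem HomogSet.tlen_eq_add_mul_ordS {T : Set ℕ} (hT : HomogSet n T) (hn : ∀ i, 0 < n i)
    {p : ℕ} (hp : p ∈ gen n) (hpT : p ∈ T) (hp0 : 0 < p) {a b : Fin d → ℕ} {j : ℕ}
    (ha : sval n a ∈ T) (hab : sval n a = sval n b + j * p) :
    tlen a = tlen b + j * ordS n p := by
  obtain ⟨c, rfl⟩ := hp
  have hlen : tlen a = tlen (b + j • c) :=
    hT.tlen_eq hn ha (by rw [hab, sval_add, sval_smul])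
  rw [hlen, tlen_add, tlen_smul, hT.ordS_sval hpT hp0.ne']

end Factorization

theorem exists_eq_add_mul_of_mul_add_mul_eq {p q A B k l : ℕ} (hq : 0 < q)
    (hcop : Nat.Coprime p q) (hkl : k ≤ l) (h : q * A + k * p = q * B + l * p) :
    ∃ j, l = k + j * q ∧ A = B + j * p := by
  obtain ⟨r, rfl⟩ := Nat.exists_eq_add_of_le hkl
  have hA : q * A = q * B + r * p := by linarith
  have hdvd : q ∣ r * p := (Nat.dvd_add_right (dvd_mul_right q B)).1 (hA ▸ dvd_mul_right q A)
  obtain ⟨j, rfl⟩ := hcop.symm.dvd_of_dvd_mul_right hdvd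
  refine ⟨j, by ring, Nat.eq_of_mul_eq_mul_left hq ?_⟩
  rw [hA]
  ring

/-- The generators `q n₁, …, q n_d, p` of the extension of `⟨n₁, …, n_d⟩` by `p` and `q`. -/
def extensionGen {d : ℕ} (n : Fin d → ℕ) (p q : ℕ) : Fin (d + 1) → ℕ :=
  Fin.snoc (fun i => q * n i) p

section Extension

variable {d : ℕ} {n : Fin d → ℕ} {m p q : ℕ}

theorem sval_extensionGen_snoc (n : Fin d → ℕ) (p q : ℕ) (a : Fin d → ℕ) (k : ℕ) :
    sval (extensionGen n p q) (Fin.snoc a k : Fin (d + 1) → ℕ) = q * sval n a + k * p := by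
  simp only [sval, extensionGen, Fin.sum_univ_castSucc, Fin.snoc_castSucc, Fin.snoc_last,
    Finset.mul_sum, mul_left_comm]

theorem tlen_snoc (a : Fin d → ℕ) (k : ℕ) :
    tlen (Fin.snoc a k : Fin (d + 1) → ℕ) = tlen a + k := by
  simp only [tlen, Fin.sum_univ_castSucc, Fin.snoc_castSucc, Fin.snoc_last]

theorem mem_gen_extensionGen {x : ℕ} :
    x ∈ gen (extensionGen n p q) ↔ ∃ s ∈ gen n, ∃ k, x = q * s + k * p := by
  constructor
  · rintro ⟨a, rfl⟩
    refine ⟨sval n (Fin.init a), ⟨_, rfl⟩, a (Fin.last d), ?_⟩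
    rw [← sval_extensionGen_snoc, Fin.snoc_init_self]
  · rintro ⟨s, ⟨a, rfl⟩, k, rfl⟩
    exact ⟨Fin.snoc a k, (sval_extensionGen_snoc n p q a k).symm⟩

theorem mem_apery_of_mem_apery_extensionGen {s k : ℕ} (hs : s ∈ gen n)
    (h : q * s + k * p ∈ Apery (extensionGen n p q) (q * m)) : s ∈ Apery n m := by
  refine ⟨hs, ?_⟩
  rintro ⟨y, hy, rfl⟩
  exact h.2 ⟨q * y + k * p, mem_gen_extensionGen.2 ⟨y, hy, k, rfl⟩, by ring⟩

theorem mul_mem_apery_extensionGen (hq : 0 < q) (hp : p ∈ gen n) (hcop : Nat.Coprime p q)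
    {s : ℕ} (hs : s ∈ Apery n m) : q * s ∈ Apery (extensionGen n p q) (q * m) := by
  refine ⟨mem_gen_extensionGen.2 ⟨s, hs.1, 0, by ring⟩, ?_⟩
  rintro ⟨y, hy, hsy⟩
  obtain ⟨z, hz, l, rfl⟩ := mem_gen_extensionGen.1 hy
  obtain ⟨j, -, hsj⟩ : ∃ j, l = 0 + j * q ∧ s = (m + z) + j * p :=
    exists_eq_add_mul_of_mul_add_mul_eq hq hcop l.zero_le (by rw [hsy]; ring)
  exact hs.2 ⟨z + j * p, add_mem_gen hz (mul_mem_gen j hp), by rw [hsj, add_assoc]⟩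

theorem tlen_add_eq_of_mem_apery_extensionGen (hhom : HomogSet n (Apery n m))
    (hn : ∀ i, 0 < n i) (hp : p ∈ gen n) (hp0 : 0 < p) (hq : 0 < q) (hcop : Nat.Coprime p q)
    (hord : p ∈ Apery n m → q = ordS n p) {a b : Fin d → ℕ} {k l : ℕ} (hkl : k ≤ l)
    (h : q * sval n a + k * p = q * sval n b + l * p)
    (hA : q * sval n a + k * p ∈ Apery (extensionGen n p q) (q * m)) :
    tlen a + k = tlen b + l := by
  have ha : sval n a ∈ Apery n m := mem_apery_of_mem_apery_extensionGen ⟨a, rfl⟩ hA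
  obtain ⟨j, rfl, hab⟩ := exists_eq_add_mul_of_mul_add_mul_eq hq hcop hkl h
  rcases j.eq_zero_or_pos with rfl | hj
  · rw [hhom.tlen_eq hn ha (by simpa using hab)]
    simp
  · have hpA : p ∈ Apery n m := mem_apery_of_add_mul_mem_apery hp ⟨b, rfl⟩ hj (hab ▸ ha)
    rw [hhom.tlen_eq_add_mul_ordS hn hp hpA hp0 ha hab, ← hord hpA]
    ring

theorem homogSet_apery_extensionGen (hhom : HomogSet n (Apery n m)) (hn : ∀ i, 0 < n i)
    (hp : p ∈ gen n) (hp0 : 0 < p) (hq : 0 < q) (hcop : Nat.Coprime p q)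
    (hord : p ∈ Apery n m → q = ordS n p) :
    HomogSet (extensionGen n p q) (Apery (extensionGen n p q) (q * m)) := by
  intro t ht _ a b ha hb
  rw [← Fin.snoc_init_self a, sval_extensionGen_snoc] at ha
  rw [← Fin.snoc_init_self b, sval_extensionGen_snoc] at hb
  rw [← Fin.snoc_init_self a, ← Fin.snoc_init_self b, tlen_snoc, tlen_snoc]
  rcases le_total (a (Fin.last d)) (b (Fin.last d)) with hle | hle
  · exact tlen_add_eq_of_mem_apery_extensionGen hhom hn hp hp0 hq hcop hord hle
      (ha.trans hb.symm) (ha ▸ ht)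
  · exact (tlen_add_eq_of_mem_apery_extensionGen hhom hn hp hp0 hq hcop hord hle
      (hb.trans ha.symm) (hb ▸ ht)).symm

theorem eq_ordS_of_homogSet_apery_extensionGen (hhom : HomogSet n (Apery n m))
    (hp0 : 0 < p) (hq : 0 < q) (hcop : Nat.Coprime p q)
    (hS : HomogSet (extensionGen n p q) (Apery (extensionGen n p q) (q * m)))
    (hpA : p ∈ Apery n m) : q = ordS n p := by
  have hqp : q * p ∈ Apery (extensionGen n p q) (q * m) :=
    mul_mem_apery_extensionGen hq hpA.1 hcop hpA
  obtain ⟨c, rfl⟩ := hpA.1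
  have hlen : tlen (Fin.snoc 0 q : Fin (d + 1) → ℕ) = tlen (Fin.snoc c 0 : Fin (d + 1) → ℕ) :=
    hS _ hqp (mul_pos hq hp0).ne' _ _
      (by rw [sval_extensionGen_snoc]; simp [sval]) (by rw [sval_extensionGen_snoc]; simp)
  rw [hhom.ordS_sval hpA hp0.ne']
  simpa [tlen_snoc, tlen] using hlen

theorem statement16_general (hhom : HomogSet n (Apery n m)) (hn : ∀ i, 0 < n i)
    (hp : p ∈ gen n) (hp0 : 0 < p) (hq : 0 < q) (hcop : Nat.Coprime p q) :
    HomogSet (extensionGen n p q) (Apery (extensionGen n p q) (q * m)) ↔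
      (q = ordS n p ∨ p ∉ Apery n m) := by
  rw [← imp_iff_or_not]
  exact ⟨eq_ordS_of_homogSet_apery_extensionGen hhom hp0 hq hcop,
    homogSet_apery_extensionGen hhom hn hp hp0 hq hcop⟩

end Extension

/-- an extension `S = ⟨q·m₁,…,q·m_d, p⟩` of a homogeneous
numerical semigroup `S₁` is homogeneous iff `q = ord_{S₁}(p)` or
`p ∉ AP(S₁,m₁)`. -/
theorem statement16 {d : ℕ} (hd : 0 < d)
    (mg : Fin d → ℕ) (hmmono : StrictMono mg) (hmpos : 0 < mg ⟨0, hd⟩)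
    (hmnum : IsNumerical mg) (hmmin : MinGen mg)
    (hhomog : HomogSet mg (Apery mg (mg ⟨0, hd⟩)))
    (p q : ℕ) (hq : 2 ≤ q) (hp : p ∈ gen mg) (hcop : Nat.Coprime p q)
    (hpn : p ∉ Set.range mg) :
    HomogSet (Fin.snoc (fun i => q * mg i) p)
        (Apery (Fin.snoc (fun i => q * mg i) p) (q * mg ⟨0, hd⟩)) ↔
      (q = ordS mg p ∨ p ∉ Apery mg (mg ⟨0, hd⟩)) := by
  have hpos : ∀ i, 0 < mg i := fun i =>
    hmpos.trans_le (hmmono.monotone (Fin.mk_le_of_le_val i.val.zero_le))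
  have hp0 : p ≠ 0 := by
    rintro rfl
    exact absurd ((Nat.coprime_zero_left q).1 hcop) (by omega)
  exact statement16_general hhomog hpos hp (Nat.pos_of_ne_zero hp0) (by omega) hcop
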